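/- arXiv:2112.11149 — 3 statements merged into one kernel-verified Lean document; each statement's English description precedes it below -/
import Mathlib

section
/- Suppose Leb has full support. Then for any subadditive potential Φ = {log φ_n}_{n≥1} over (X,T): ess sup_{x} limsup_{n→∞} (1/n)·log φ_n(x) ≤ sup{χ(μ,Φ) : μ ∈ O} ≤ limsup_{n→∞} (1/n)·ess sup_{x} log φ_n(x), where the essential suprema are taken with respect to Leb. -/
open MeasureTheory Filter Topology
open scoped ENNReal

/-- The empirical probability measure `γ_{n+1,x} = (1/(n+1)) ∑_{j≤n} δ_{T^j x}` of the orbit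
of `x` (indexed so that it is a probability measure for every index). -/
noncomputable def empiricalPM {X : Type*} [MeasurableSpace X] (T : X → X) (x : X) (n : ℕ) :
    MeasureTheory.ProbabilityMeasure X :=
  ⟨(n + 1 : ℝ≥0∞)⁻¹ • ∑ j ∈ Finset.range (n + 1), MeasureTheory.Measure.dirac (T^[j] x), by
    constructor
    rw [Measure.smul_apply, Measure.finset_sum_apply]
    simp
    rw [ENNReal.inv_mul_cancel] <;> simp⟩

/-- The set `V(x)` of weak* limit points of the sequence of empirical measures of `x`. -/
def limitSet {X : Type*} [MeasurableSpace X] [TopologicalSpace X] [OpensMeasurableSpace X]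
    (T : X → X) (x : X) : Set (MeasureTheory.ProbabilityMeasure X) :=
  {μ | ∃ φ : ℕ → ℕ, StrictMono φ ∧ Tendsto (fun j => empiricalPM T x (φ j)) atTop (𝓝 μ)}

/-- `μ` is an observable (physical-like) measure for `(X, T, Leb)`: every weak* neighbourhood
`U` of `μ` (equivalently, every ε-ball around `μ` in a compatible metric) is intersected by
`V(x)` for a positive `Leb`-measure set of points `x`. -/
def IsObservable {X : Type*} [MeasurableSpace X] [TopologicalSpace X] [OpensMeasurableSpace X]
    (Leb : MeasureTheory.Measure X) (T : X → X) (μ : MeasureTheory.ProbabilityMeasure X) : Prop :=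
  ∀ U : Set (MeasureTheory.ProbabilityMeasure X), IsOpen U → μ ∈ U →
    0 < Leb {x | (limitSet T x ∩ U).Nonempty}

/-- The Lyapunov exponent `χ(μ, Φ) = lim_n (1/n) ∫ log φ_n dμ` of a potential
`Φ = {log φ_n}` (for invariant `μ` the limit exists by subadditivity, so it equals the
`liminf` used here); it takes values in `[-∞, ∞)`, i.e. in `EReal`. -/
noncomputable def lyapExp {X : Type*} [MeasurableSpace X] (φ : ℕ → X → ℝ)
    (μ : MeasureTheory.Measure X) : EReal :=
  liminf (fun n : ℕ => (((n : ℝ)⁻¹ * ∫ x, Real.log (φ n x) ∂μ : ℝ) : EReal)) atTop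
/-- Every partial block of a subadditive cocycle is dominated by the Birkhoff sum of its `m`-th
term, up to a constant independent of the point and the length. -/
lemma exists_subadditive_le_birkhoff {X : Type*} (T : X → X) (g : ℕ → X → ℝ)
    (hg : ∀ a b x, g (a + b) x ≤ g a x + g b (T^[a] x))
    (hbdd : ∀ i, ∃ M, ∀ x, |g i x| ≤ M) (m : ℕ) (hm : 1 ≤ m) :
    ∃ C : ℝ, ∀ k x, m * g (k + m) x ≤ ∑ j ∈ Finset.range (k + m), g m (T^[j] x) + C := by
  choose M hM using hbdd
  obtain ⟨B, hB⟩ : ∃ B, ∀ i ≤ 2 * m, ∀ x, |g i x| ≤ B := by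
    obtain ⟨B, hB⟩ := ((Finset.range (2 * m + 1)).image M).bddAbove
    refine ⟨B, fun i hi x => (hM i x).trans (hB ?_)⟩
    exact Finset.mem_coe.2 (Finset.mem_image_of_mem _ (Finset.mem_range.2 (by omega)))
  have hblock : ∀ (q : ℕ) (s : ℕ → ℕ) (x : X),
      ∑ r ∈ Finset.range m, g (q * m + s r) (T^[r] x) ≤
        ∑ j ∈ Finset.range (q * m), g m (T^[j] x) +
          ∑ r ∈ Finset.range m, g (s r) (T^[q * m + r] x) := by
    intro q
    induction q with
    | zero => intro s x; simp
    | succ q ih =>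
      intro s x
      have h1 := ih (fun r => m + s r) x
      have h2 : ∑ r ∈ Finset.range m, g (m + s r) (T^[q * m + r] x) ≤
          ∑ r ∈ Finset.range m, g m (T^[q * m + r] x) +
            ∑ r ∈ Finset.range m, g (s r) (T^[(q + 1) * m + r] x) := by
        rw [← Finset.sum_add_distrib]
        refine Finset.sum_le_sum fun r _ => ?_
        have h3 := hg m (s r) (T^[q * m + r] x)
        rw [← Function.iterate_add_apply] at h3
        rwa [show (q + 1) * m + r = m + (q * m + r) by ring]
      have h4 : ∀ r, (q + 1) * m + s r = q * m + (m + s r) := fun r => by ring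
      simp only [h4]
      rw [show (q + 1) * m = q * m + m by ring, Finset.sum_range_add]
      rw [show (q + 1) * m = q * m + m by ring] at h2
      linarith
  refine ⟨4 * m * B, fun k x => ?_⟩
  have hk : k / m * m + k % m = k := Nat.div_add_mod' k m
  have hs : k % m < m := Nat.mod_lt _ hm
  set q := k / m
  set s := k % m
  have hstart : (m : ℝ) * g (k + m) x ≤
      ∑ r ∈ Finset.range m, (B + g (q * m + (s + m - r)) (T^[r] x)) := by
    rw [← nsmul_eq_mul, ← Finset.card_range m, ← Finset.sum_const, Finset.card_range]
    refine Finset.sum_le_sum fun r hr => ?_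
    have hr := Finset.mem_range.1 hr
    have h1 := hg r (q * m + (s + m - r)) x
    rw [show r + (q * m + (s + m - r)) = k + m by omega] at h1
    linarith [(abs_le.1 (hB r (by omega) x)).2]
  have hend : ∑ r ∈ Finset.range m, g (s + m - r) (T^[q * m + r] x) ≤ m * B := by
    refine (Finset.sum_le_card_nsmul _ _ B fun r hr => ?_).trans (by simp)
    exact (abs_le.1 (hB _ (by omega) _)).2
  have hrest : -(2 * m * B) ≤ ∑ j ∈ Finset.range (s + m), g m (T^[q * m + j] x) := by
    have hB0 : 0 ≤ B := (abs_nonneg _).trans (hB m (by omega) x)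
    have h1 := Finset.card_nsmul_le_sum (Finset.range (s + m))
      (fun j => g m (T^[q * m + j] x)) (-B)
      fun j _ => (abs_le.1 (hB _ (by omega) _)).1
    rw [Finset.card_range, nsmul_eq_mul] at h1
    have h2 : ((s + m : ℕ) : ℝ) ≤ 2 * m := by exact_mod_cast (by omega : s + m ≤ 2 * m)
    nlinarith
  have hsplit : ∑ j ∈ Finset.range (k + m), g m (T^[j] x) =
      ∑ j ∈ Finset.range (q * m), g m (T^[j] x) +
        ∑ j ∈ Finset.range (s + m), g m (T^[q * m + j] x) := by
    rw [← Finset.sum_range_add]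
    congr 2
    omega
  rw [Finset.sum_add_distrib, Finset.sum_const, Finset.card_range, nsmul_eq_mul] at hstart
  have := hblock q (fun r => s + m - r) x
  linarith

lemma integral_empiricalPM {X : Type*} [MeasurableSpace X] (T : X → X) (x : X) (n : ℕ)
    {f : X → ℝ} (hf : StronglyMeasurable f) :
    ∫ y, f y ∂(empiricalPM T x n : Measure X) =
      ((n + 1 : ℕ) : ℝ)⁻¹ * ∑ j ∈ Finset.range (n + 1), f (T^[j] x) := by
  change ∫ y, f y ∂((n + 1 : ℝ≥0∞)⁻¹ • ∑ j ∈ Finset.range (n + 1), Measure.dirac (T^[j] x)) = _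
  rw [integral_smul_measure, integral_finsetSum_measure]
  · simp only [integral_dirac' _ _ hf, smul_eq_mul]
    congr 1
    rw [ENNReal.toReal_inv]
    norm_cast
  · intro j _
    exact integrable_dirac' hf (by simp)

/-- The limit points of the empirical measures of almost every point are observable. -/
lemma ae_limitSet_observable {X : Type*} [MetricSpace X] [CompactSpace X] [MeasurableSpace X]
    [BorelSpace X] (T : X → X) (Leb : Measure X) :
    ∀ᵐ x ∂Leb, ∀ μ ∈ limitSet T x, IsObservable Leb T μ := by
  let S : Set (Set (ProbabilityMeasure X)) :=
    {U | IsOpen U ∧ Leb {x | (limitSet T x ∩ U).Nonempty} = 0}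
  let _ := TopologicalSpace.pseudoMetrizableSpacePseudoMetric (ProbabilityMeasure X)
  have : SecondCountableTopology (ProbabilityMeasure X) :=
    UniformSpace.secondCountable_of_separable _
  obtain ⟨S', hS'c, hS'S, hS'⟩ := TopologicalSpace.isOpen_sUnion_countable S fun U hU => hU.1
  have h : ∀ᵐ x ∂Leb, ∀ U ∈ S', ¬ (limitSet T x ∩ U).Nonempty := by
    rw [ae_ball_iff hS'c]
    intro U hU
    rw [ae_iff]
    simpa using (hS'S hU).2
  filter_upwards [h] with x hx μ hμ U hU hμU
  refine pos_iff_ne_zero.2 fun h0 => ?_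
  have hmem : μ ∈ ⋃₀ S := ⟨U, ⟨hU, h0⟩, hμU⟩
  rw [← hS'] at hmem
  obtain ⟨V, hV, hμV⟩ := hmem
  exact hx V hV ⟨μ, hμ, hμV⟩

/-- Along an orbit, any value exceeded infinitely often by the averages of a subadditive cocycle
is at most all normalized integrals of the cocycle for some limit point of the empirical
measures. -/
lemma exists_mem_limitSet_le_integral {X : Type*} [MetricSpace X] [CompactSpace X]
    [MeasurableSpace X] [BorelSpace X] (T : X → X) (g : ℕ → X → ℝ)
    (hcont : ∀ n, Continuous (g n))
    (hg : ∀ a b x, g (a + b) x ≤ g a x + g b (T^[a] x)) (x : X) (c : ℝ)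
    (hc : ∃ᶠ n : ℕ in atTop, c < (n : ℝ)⁻¹ * g n x) :
    ∃ μ ∈ limitSet T x, ∀ m : ℕ, 1 ≤ m → c ≤ (m : ℝ)⁻¹ * ∫ y, g m y ∂(μ : Measure X) := by
  have hc' : ∃ᶠ n : ℕ in atTop, c < ((n + 1 : ℕ) : ℝ)⁻¹ * g (n + 1) x := by
    rw [frequently_atTop] at hc ⊢
    intro a
    obtain ⟨b, hb, h⟩ := hc (a + 1)
    refine ⟨b - 1, by omega, ?_⟩
    rwa [Nat.sub_add_cancel (by omega)]
  obtain ⟨u, hu, huc⟩ := extraction_of_frequently_atTop hc'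
  let _ := TopologicalSpace.pseudoMetrizableSpacePseudoMetric (ProbabilityMeasure X)
  obtain ⟨μ, v, hv, hlim⟩ := CompactSpace.tendsto_subseq fun j => empiricalPM T x (u j)
  refine ⟨μ, ⟨u ∘ v, hu.comp hv, hlim⟩, fun m hm => ?_⟩
  have hbdd : ∀ i, ∃ M, ∀ y, |g i y| ≤ M := fun i => by
    obtain ⟨M, hM⟩ := isCompact_univ.exists_bound_of_continuousOn (hcont i).continuousOn
    exact ⟨M, fun y => hM y trivial⟩
  obtain ⟨C, hC⟩ := exists_subadditive_le_birkhoff T g hg hbdd m hm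
  have hint := (ProbabilityMeasure.tendsto_iff_forall_integral_tendsto.1 hlim)
    (BoundedContinuousFunction.mkOfCompact ⟨g m, hcont m⟩)
  simp only [BoundedContinuousFunction.mkOfCompact_apply, ContinuousMap.coe_mk,
    Function.comp_apply, integral_empiricalPM T x _ (hcont m).stronglyMeasurable] at hint
  have huv : Tendsto (fun j => u (v j)) atTop atTop := (hu.comp hv).tendsto_atTop
  have herr : Tendsto (fun j => ((u (v j) + 1 : ℕ) : ℝ)⁻¹ * C) atTop (𝓝 0) := by
    have h := (tendsto_inv_atTop_nhds_zero_nat (𝕜 := ℝ)).comp ((tendsto_add_atTop_nat 1).comp huv)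
    simpa using h.mul_const C
  have hle : ∀ᶠ j in atTop, (m : ℝ) * c ≤ ((u (v j) + 1 : ℕ) : ℝ)⁻¹ *
      ∑ i ∈ Finset.range (u (v j) + 1), g m (T^[i] x) + ((u (v j) + 1 : ℕ) : ℝ)⁻¹ * C := by
    filter_upwards [huv.eventually_ge_atTop m] with j hj
    have h1 := hC (u (v j) + 1 - m) x
    rw [Nat.sub_add_cancel (by omega)] at h1
    have h2 := (huc (v j)).le
    rw [← mul_add]
    calc (m : ℝ) * c ≤ m * (((u (v j) + 1 : ℕ) : ℝ)⁻¹ * g (u (v j) + 1) x) := by gcongr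
      _ = ((u (v j) + 1 : ℕ) : ℝ)⁻¹ * (m * g (u (v j) + 1) x) := by ring
      _ ≤ _ := by gcongr
  have hfin := ge_of_tendsto (hint.add herr) hle
  rw [add_zero] at hfin
  rwa [le_inv_mul_iff₀ (by exact_mod_cast hm)]

/-- For a fully supported reference measure, the essential supremum of a continuous function
dominates its integral against every probability measure. -/
lemma integral_le_essSup {X : Type*} [TopologicalSpace X] [CompactSpace X]
    [MeasurableSpace X] [BorelSpace X] (Leb : Measure X)
    (hfull : ∀ U : Set X, IsOpen U → U.Nonempty → 0 < Leb U)
    (μ : Measure X) [IsProbabilityMeasure μ] {f : X → ℝ} (hf : Continuous f) :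
    ((∫ x, f x ∂μ : ℝ) : EReal) ≤ essSup (fun x => (f x : EReal)) Leb := by
  have hle : ∀ x, (f x : EReal) ≤ essSup (fun x => (f x : EReal)) Leb := by
    intro x
    by_contra! hlt
    have hopen : IsOpen {y | essSup (fun x => (f x : EReal)) Leb < f y} :=
      isOpen_lt continuous_const (continuous_coe_real_ereal.comp hf)
    refine (hfull _ hopen ⟨x, hlt⟩).ne' ?_
    have hae := ae_le_essSup (f := fun x => (f x : EReal)) (μ := Leb)
    simpa [ae_iff] using hae
  have : Nonempty X := μ.nonempty_of_neZero
  obtain ⟨x, -, hx⟩ := isCompact_univ.exists_isMaxOn Set.univ_nonempty hf.continuousOn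
  refine le_trans (EReal.coe_le_coe_iff.2 ?_) (hle x)
  have hmono := integral_mono (μ := μ) (hf.integrable_of_hasCompactSupport
    (HasCompactSupport.of_compactSpace f)) (integrable_const (f x)) fun y => hx trivial
  simpa using hmono

/-- **Lemma 4.3.** For every subadditive potential `Φ = {log φ_n}` over `(X, T)` with `T` a
homeomorphism of a compact metric space `X` and `Leb` a fully supported Borel probability
reference measure:
`ess sup_x limsup_n (1/n) log φ_n(x) ≤ sup {χ(μ,Φ) : μ ∈ O} ≤ limsup_n (1/n) ess sup_x log φ_n(x)`,
the essential suprema being taken with respect to `Leb`. -/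
theorem essSup_limsup_le_sup_observable_le_limsup_essSup
    {X : Type*} [MetricSpace X] [CompactSpace X] [MeasurableSpace X] [BorelSpace X]
    (T : X → X) (hT : IsHomeomorph T)
    (Leb : MeasureTheory.Measure X) [IsProbabilityMeasure Leb]
    (hfull : ∀ U : Set X, IsOpen U → U.Nonempty → 0 < Leb U)
    (φ : ℕ → X → ℝ)
    (hcont : ∀ n, 1 ≤ n → Continuous (φ n))
    (hpos : ∀ n, 1 ≤ n → ∀ x, 0 < φ n x)
    (hsub : ∀ m n, 1 ≤ m → 1 ≤ n → ∀ x, φ (m + n) x ≤ φ m x * φ n (T^[m] x)) :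
    essSup (fun x => limsup (fun n : ℕ =>
          (((n : ℝ)⁻¹ * Real.log (φ n x) : ℝ) : EReal)) atTop) Leb
        ≤ sSup {c : EReal | ∃ μ : ProbabilityMeasure X,
            IsObservable Leb T μ ∧ c = lyapExp φ (μ : Measure X)} ∧
      sSup {c : EReal | ∃ μ : ProbabilityMeasure X,
            IsObservable Leb T μ ∧ c = lyapExp φ (μ : Measure X)}
        ≤ limsup (fun n : ℕ =>
            (((n : ℝ)⁻¹ : ℝ) : EReal) *
              essSup (fun x => ((Real.log (φ n x) : ℝ) : EReal)) Leb) atTop := by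
  constructor
  · refine essSup_le_of_ae_le _ ?_
    filter_upwards [ae_limitSet_observable T Leb] with x hx
    refine le_of_forall_lt fun c hc => ?_
    obtain ⟨r, hcr, hr⟩ := EReal.lt_iff_exists_real_btwn.1 hc
    refine hcr.trans_le ?_
    let g : ℕ → X → ℝ := fun n y => if n = 0 then 0 else Real.log (φ n y)
    have hg0 : ∀ n, 1 ≤ n → g n = fun y => Real.log (φ n y) := fun n hn => by
      funext y
      exact if_neg (by omega)
    have hgcont : ∀ n, Continuous (g n) := fun n => by
      rcases Nat.eq_zero_or_pos n with rfl | hn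
      · exact continuous_const
      · rw [hg0 n hn]
        exact (hcont n hn).log fun y => (hpos n hn y).ne'
    have hgsub : ∀ a b y, g (a + b) y ≤ g a y + g b (T^[a] y) := fun a b y => by
      rcases Nat.eq_zero_or_pos a with rfl | ha
      · simp [g]
      rcases Nat.eq_zero_or_pos b with rfl | hb
      · simp [g]
      rw [hg0 _ ha, hg0 _ hb, hg0 _ (by omega),
        ← Real.log_mul (hpos a ha _).ne' (hpos b hb _).ne']
      exact Real.log_le_log (hpos _ (by omega) _) (hsub a b ha hb y)
    have hfreq : ∃ᶠ n : ℕ in atTop, r < (n : ℝ)⁻¹ * g n x := by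
      refine ((frequently_lt_of_lt_limsup (by isBoundedDefault) hr).and_eventually
        (eventually_ge_atTop 1)).mono fun n hn => ?_
      rw [hg0 n hn.2]
      exact EReal.coe_lt_coe_iff.1 hn.1
    obtain ⟨μ, hμ, hle⟩ := exists_mem_limitSet_le_integral T g hgcont hgsub x r hfreq
    refine le_trans ?_ (le_sSup ⟨μ, hx μ hμ, rfl⟩)
    refine le_liminf_of_le (by isBoundedDefault) ?_
    filter_upwards [eventually_ge_atTop 1] with m hm
    have h := hle m hm
    rw [hg0 m hm] at h
    exact EReal.coe_le_coe_iff.2 h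
  · refine sSup_le ?_
    rintro _ ⟨μ, -, rfl⟩
    refine (liminf_le_limsup (by isBoundedDefault) (by isBoundedDefault)).trans (limsup_le_limsup ?_)
    filter_upwards [eventually_ge_atTop 1] with n hn
    rw [EReal.coe_mul]
    refine mul_le_mul_of_nonneg_left (integral_le_essSup Leb hfull _ ?_) ?_
    · exact (hcont n hn).log fun y => (hpos n hn y).ne'
    · exact_mod_cast (by positivity : (0 : ℝ) ≤ (n : ℝ)⁻¹)
end

section
/- Let a_n : X → ℝ and b_n : X → ℝ (n ≥ 0) be two sequences of continuous functions such that for every x ∈ X and n, k ≥ 0: a_{n+k}(x) ≤ a_n(T^k x) + a_k(x), b_{n+k}(x) ≤ b_n(T^k x) + b_k(x), and a_n(x) ≤ a_{n+k}(x) + b_k(T^n x). If lim_{n→∞} (1/n)·∫ a_n dμ < 0 for every observable measure μ ∈ O, then there exist λ > 0 and K ∈ ℕ such that for Leb-a.e. x, limsup_{n→∞} (1/(nK))·Σ_{i=0}^{n-1} a_K(T^{iK} x) ≤ −λ < 0. -/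
open MeasureTheory Filter Topology
open scoped ENNReal

section SubadditiveBounds

variable {X : Type*} {T : X → X} {a : ℕ → X → ℝ}

/-- Splitting `a (s + M * L + r)` along the blocks of length `L` that start at time `r`. -/
lemma subadditive_le_sum_blocks
    (ha : ∀ n k : ℕ, ∀ x, a (n + k) x ≤ a n (T^[k] x) + a k x) (L r M s : ℕ) (x : X) :
    a (s + M * L + r) x ≤
      a s (T^[M * L + r] x) + ∑ k ∈ Finset.range M, a L (T^[k * L + r] x) + a r x := by
  induction M generalizing s with
  | zero => simpa using ha s r x
  | succ M ih =>
    have h1 := ih (s + L)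
    have h2 := ha s L (T^[M * L + r] x)
    rw [← Function.iterate_add_apply] at h2
    rw [Finset.sum_range_succ, show s + (M + 1) * L + r = s + L + M * L + r by ring,
      show (M + 1) * L + r = L + (M * L + r) by ring]
    linarith

lemma sum_range_sum_range_blocks (f : ℕ → ℝ) (L M : ℕ) :
    ∑ r ∈ Finset.range L, ∑ k ∈ Finset.range M, f (k * L + r) =
      ∑ j ∈ Finset.range (M * L), f j := by
  rw [Finset.sum_comm]
  induction M with
  | zero => simp
  | succ M ih => rw [Finset.sum_range_succ, ih, Nat.succ_mul, Finset.sum_range_add]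

lemma sum_range_sum_range_birkhoff (f : X → ℝ) (N n : ℕ) (x : X) :
    ∑ i ∈ Finset.range n, birkhoffSum T f N (T^[i * N] x) = birkhoffSum T f (n * N) x := by
  induction n with
  | zero => simp
  | succ n ih => rw [Finset.sum_range_succ, ih, Nat.succ_mul, birkhoffSum_add]

lemma exists_forall_abs_le_of_continuous [TopologicalSpace X] [CompactSpace X] {f : X → ℝ}
    (hf : Continuous f) : ∃ C, ∀ x, |f x| ≤ C := by
  obtain ⟨C, hC⟩ := isCompact_univ.exists_bound_of_continuousOn hf.continuousOn
  exact ⟨C, fun x => hC x (Set.mem_univ x)⟩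

/-- Up to a bounded error, `a N` is at most the Birkhoff sum of `a L / L` of length `N`. -/
lemma exists_mul_le_birkhoffSum_add [TopologicalSpace X] [CompactSpace X]
    (hacont : ∀ n, Continuous (a n))
    (ha : ∀ n k : ℕ, ∀ x, a (n + k) x ≤ a n (T^[k] x) + a k x) (L : ℕ) :
    ∃ C : ℝ, ∀ M : ℕ, ∀ x,
      L * a ((M + 1) * L) x ≤ birkhoffSum T (a L) ((M + 1) * L) x + C := by
  choose B hB using fun n => exists_forall_abs_le_of_continuous (hacont n)
  set A := ∑ i ∈ Finset.range (L + 1), |B i| with hA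
  have hbound : ∀ i ≤ L, ∀ x, |a i x| ≤ A := fun i hi x =>
    ((hB i x).trans (le_abs_self _)).trans
      (Finset.single_le_sum (f := fun i => |B i|) (fun _ _ => abs_nonneg _)
        (Finset.mem_range.2 (Nat.lt_succ_of_le hi)))
  refine ⟨L * (3 * A), fun M x => ?_⟩
  have h1 : ∀ r ∈ Finset.range L,
      a ((M + 1) * L) x ≤ ∑ k ∈ Finset.range M, a L (T^[k * L + r] x) + 2 * A := by
    intro r hr
    rw [Finset.mem_range] at hr
    have h := subadditive_le_sum_blocks ha L r M (L - r) x
    rw [show L - r + M * L + r = (M + 1) * L by rw [Nat.succ_mul]; omega] at h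
    have h2 := (abs_le.1 (hbound (L - r) (by omega) (T^[M * L + r] x))).2
    have h3 := (abs_le.1 (hbound r hr.le x)).2
    linarith
  have h2 := Finset.sum_le_sum h1
  rw [Finset.sum_add_distrib,
    sum_range_sum_range_blocks (fun j => a L (T^[j] x)) L M] at h2
  simp only [Finset.sum_const, Finset.card_range, nsmul_eq_mul] at h2
  have h3 : ∑ r ∈ Finset.range L, (-A) ≤ birkhoffSum T (a L) L (T^[M * L] x) :=
    Finset.sum_le_sum fun r _ => (abs_le.1 (hbound L le_rfl _)).1
  simp only [Finset.sum_const, Finset.card_range, nsmul_eq_mul] at h3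
  have h4 : birkhoffSum T (a L) (M * L) x = ∑ j ∈ Finset.range (M * L), a L (T^[j] x) := rfl
  rw [Nat.succ_mul, birkhoffSum_add, h4]
  rw [Nat.succ_mul] at h2
  linarith

end SubadditiveBounds

section Observable

lemma isClosed_setOf_isObservable {X : Type*} [MeasurableSpace X] [TopologicalSpace X]
    [OpensMeasurableSpace X] (Leb : Measure X) (T : X → X) :
    IsClosed {μ : ProbabilityMeasure X | IsObservable Leb T μ} := by
  rw [← isOpen_compl_iff, isOpen_iff_forall_mem_open]
  intro μ hμ
  simp only [Set.mem_compl_iff, Set.mem_ofPred_eq, IsObservable, not_forall] at hμ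
  obtain ⟨U, hU, hμU, h0⟩ := hμ
  exact ⟨U, fun ν hν hobs => h0 (hobs U hU hν), hU, hμU⟩

variable {X : Type*} [MetricSpace X] [CompactSpace X] [MeasurableSpace X] [BorelSpace X]
  {T : X → X}

lemma integrable_of_continuous_of_compactSpace {f : X → ℝ} (hf : Continuous f) (μ : Measure X)
    [IsFiniteMeasure μ] : Integrable f μ :=
  hf.integrable_of_hasCompactSupport (HasCompactSupport.of_compactSpace f)

lemma integral_empiricalPM_s4 {f : X → ℝ} (hf : Continuous f) (x : X) (n : ℕ) :
    ∫ y, f y ∂(empiricalPM T x n : Measure X) = birkhoffAverage ℝ T f (n + 1) x := by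
  change ∫ y, f y ∂((n + 1 : ℝ≥0∞)⁻¹ •
    ∑ j ∈ Finset.range (n + 1), Measure.dirac (T^[j] x)) = _
  rw [integral_smul_measure, integral_finsetSum_measure
    (fun _ _ => integrable_of_continuous_of_compactSpace hf _)]
  simp only [integral_dirac, birkhoffAverage, birkhoffSum]
  congr 1
  rw [ENNReal.toReal_inv]
  norm_cast

lemma continuous_integral_probabilityMeasure {f : X → ℝ} (hf : Continuous f) :
    Continuous fun μ : ProbabilityMeasure X => ∫ x, f x ∂(μ : Measure X) :=
  ProbabilityMeasure.continuous_integral_continuousMap (⟨f, hf⟩ : C(X, ℝ))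

/-- Weak* limits of empirical measures are invariant. -/
lemma integral_comp_of_mem_limitSet (hT : Continuous T) {x : X} {μ : ProbabilityMeasure X}
    (hμ : μ ∈ limitSet T x) {f : X → ℝ} (hf : Continuous f) :
    ∫ y, f (T y) ∂(μ : Measure X) = ∫ y, f y ∂(μ : Measure X) := by
  obtain ⟨φ, hφ, hlim⟩ := hμ
  have h1 := ((continuous_integral_probabilityMeasure (hf.comp hT)).tendsto μ).comp hlim
  have h2 := ((continuous_integral_probabilityMeasure hf).tendsto μ).comp hlim
  have hbdd : Bornology.IsBounded (Set.range (f <| T^[·] x)) := by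
    refine (isCompact_range hf).isBounded.subset ?_
    rintro _ ⟨n, rfl⟩
    exact ⟨_, rfl⟩
  have h3 := (tendsto_birkhoffAverage_apply_sub_birkhoffAverage ℝ hbdd).comp
    ((tendsto_add_atTop_nat 1).comp hφ.tendsto_atTop)
  have h4 := h1.sub h2
  refine sub_eq_zero.1 (tendsto_nhds_unique h4 (h3.congr fun n => ?_))
  simp only [Function.comp_apply]
  rw [integral_empiricalPM_s4 hf, integral_empiricalPM_s4 (f := fun y => f (T y)) (hf.comp hT)]
  congr 1
  simp only [birkhoffAverage, birkhoffSum, ← Function.iterate_succ_apply' T,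
    ← Function.iterate_succ_apply T]

lemma IsObservable.integral_comp {Leb : Measure X} (hT : Continuous T)
    {μ : ProbabilityMeasure X} (hμ : IsObservable Leb T μ) {f : X → ℝ} (hf : Continuous f) :
    ∫ y, f (T y) ∂(μ : Measure X) = ∫ y, f y ∂(μ : Measure X) := by
  by_contra hne
  have hopen : IsOpen {ν : ProbabilityMeasure X |
      ∫ y, f (T y) ∂(ν : Measure X) ≠ ∫ y, f y ∂(ν : Measure X)} :=
    isOpen_ne_fun (continuous_integral_probabilityMeasure (hf.comp hT))
      (continuous_integral_probabilityMeasure hf)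
  refine (hμ _ hopen hne).ne' ?_
  convert measure_empty (μ := Leb)
  refine Set.eq_empty_of_forall_notMem ?_
  rintro x ⟨ν, hν, hν'⟩
  exact hν' (integral_comp_of_mem_limitSet hT hν hf)

lemma IsObservable.integral_comp_iterate {Leb : Measure X} (hT : Continuous T)
    {μ : ProbabilityMeasure X} (hμ : IsObservable Leb T μ) {f : X → ℝ} (hf : Continuous f)
    (n : ℕ) : ∫ y, f (T^[n] y) ∂(μ : Measure X) = ∫ y, f y ∂(μ : Measure X) := by
  induction n with
  | zero => rfl
  | succ n ih => exact (hμ.integral_comp hT (hf.comp (hT.iterate n))).trans ih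

lemma ae_limitSet_subset_isObservable (Leb : Measure X) (T : X → X) :
    ∀ᵐ x ∂Leb, ∀ μ ∈ limitSet T x, IsObservable Leb T μ := by
  have : SecondCountableTopology (ProbabilityMeasure X) := by
    let : MetricSpace (ProbabilityMeasure X) := TopologicalSpace.metrizableSpaceMetric _
    infer_instance
  have hex : ∀ μ : {μ : ProbabilityMeasure X // ¬ IsObservable Leb T μ},
      ∃ U : Set (ProbabilityMeasure X), IsOpen U ∧ μ.1 ∈ U ∧
        Leb {x | (limitSet T x ∩ U).Nonempty} = 0 := by
    rintro ⟨μ, hμ⟩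
    simp only [IsObservable, not_forall, not_lt, nonpos_iff_eq_zero] at hμ
    obtain ⟨U, hU, hμU, h0⟩ := hμ
    exact ⟨U, hU, hμU, h0⟩
  choose U hU hμU h0 using hex
  obtain ⟨S, hS, hSU⟩ := TopologicalSpace.isOpen_iUnion_countable U hU
  have hae : ∀ᵐ x ∂Leb, ∀ ν ∈ S, ¬ (limitSet T x ∩ U ν).Nonempty :=
    (ae_ball_iff hS).2 fun ν _ => by
      simpa [ae_iff] using h0 ν
  filter_upwards [hae] with x hx μ hμ
  by_contra hobs
  have hmem : μ ∈ ⋃ ν, U ν := Set.mem_iUnion.2 ⟨⟨μ, hobs⟩, hμU _⟩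
  rw [← hSU] at hmem
  simp only [Set.mem_iUnion] at hmem
  obtain ⟨ν, hν, hμν⟩ := hmem
  exact hx ν hν ⟨μ, hμ, hμν⟩

lemma IsObservable.integral_subadditive_mul_le {Leb : Measure X} (hT : Continuous T)
    {a : ℕ → X → ℝ} (hacont : ∀ n, Continuous (a n))
    (ha : ∀ n k : ℕ, ∀ x, a (n + k) x ≤ a n (T^[k] x) + a k x)
    {μ : ProbabilityMeasure X} (hμ : IsObservable Leb T μ) (n k : ℕ) :
    ∫ x, a ((k + 1) * n) x ∂(μ : Measure X) ≤ (k + 1) * ∫ x, a n x ∂(μ : Measure X) := by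
  induction k with
  | zero => simp
  | succ k ih =>
    have hint := fun m => integrable_of_continuous_of_compactSpace (hacont m) (μ : Measure X)
    have hint' := integrable_of_continuous_of_compactSpace
      ((hacont ((k + 1) * n)).comp (hT.iterate n)) (μ : Measure X)
    have h := integral_mono (hint ((k + 1) * n + n)) (hint'.add (hint n))
      (fun x => ha ((k + 1) * n) n x)
    rw [integral_add' hint' (hint n)] at h
    simp only [Function.comp_def] at h
    rw [hμ.integral_comp_iterate hT (hacont _)] at h
    rw [Nat.succ_mul (k + 1) n]
    push_cast
    linarith

/-- A single time works for all observable measures, with a uniform bound. -/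
lemma exists_integral_lt_of_isObservable {Leb : Measure X} (hT : Continuous T)
    {a : ℕ → X → ℝ} (hacont : ∀ n, Continuous (a n))
    (ha : ∀ n k : ℕ, ∀ x, a (n + k) x ≤ a n (T^[k] x) + a k x)
    (hneg : ∀ μ : ProbabilityMeasure X, IsObservable Leb T μ →
      ∃ n : ℕ, 0 < n ∧ ∫ x, a n x ∂(μ : Measure X) < 0) :
    ∃ L : ℕ, 0 < L ∧ ∃ c : ℝ, 0 < c ∧ ∀ μ : ProbabilityMeasure X, IsObservable Leb T μ →
      ∫ x, a L x ∂(μ : Measure X) < -c := by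
  have hmul : ∀ {μ : ProbabilityMeasure X}, IsObservable Leb T μ → ∀ {n k : ℕ} {c d : ℝ},
      0 < k → 0 < d → d ≤ c → ∫ x, a n x ∂(μ : Measure X) < -c →
      ∫ x, a (k * n) x ∂(μ : Measure X) < -d := by
    intro μ hμ n k c d hk hd hdc h
    obtain ⟨k, rfl⟩ := Nat.exists_eq_succ_of_ne_zero hk.ne'
    have h1 := hμ.integral_subadditive_mul_le hT hacont ha n k
    have h2 : (0 : ℝ) ≤ k := k.cast_nonneg
    change ∫ x, a ((k + 1) * n) x ∂(μ : Measure X) < -d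
    nlinarith
  suffices h : ∃ L : ℕ, 0 < L ∧ ∃ c : ℝ, 0 < c ∧
      ∀ μ ∈ {μ : ProbabilityMeasure X | IsObservable Leb T μ}, IsObservable Leb T μ →
        ∫ x, a L x ∂(μ : Measure X) < -c by
    obtain ⟨L, hL, c, hc, h⟩ := h
    exact ⟨L, hL, c, hc, fun μ hμ => h μ hμ hμ⟩
  refine (isClosed_setOf_isObservable Leb T).isCompact.induction_on
    (p := fun s => ∃ L : ℕ, 0 < L ∧ ∃ c : ℝ, 0 < c ∧
      ∀ μ ∈ s, IsObservable Leb T μ → ∫ x, a L x ∂(μ : Measure X) < -c) ?_ ?_ ?_ ?_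
  · exact ⟨1, one_pos, 1, one_pos, by simp⟩
  · rintro s t hst ⟨L, hL, c, hc, h⟩
    exact ⟨L, hL, c, hc, fun μ hμ => h μ (hst hμ)⟩
  · rintro s t ⟨L, hL, c, hc, h⟩ ⟨L', hL', c', hc', h'⟩
    have hd : 0 < min c c' := lt_min hc hc'
    refine ⟨L' * L, Nat.mul_pos hL' hL, min c c', hd, ?_⟩
    rintro μ (hμ | hμ) hobs
    · exact hmul hobs hL' hd (min_le_left _ _) (h μ hμ hobs)
    · rw [mul_comm]
      exact hmul hobs hL hd (min_le_right _ _) (h' μ hμ hobs)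
  · intro μ hμ
    obtain ⟨n, hn, hlt⟩ := hneg μ hμ
    obtain ⟨c, hc⟩ := exists_between hlt
    refine ⟨{ν | ∫ x, a n x ∂(ν : Measure X) < c}, mem_nhdsWithin_of_mem_nhds
      (((continuous_integral_probabilityMeasure (hacont n)).tendsto μ).eventually
        (gt_mem_nhds hc.1)), n, hn, -c, neg_pos.2 hc.2, fun ν hν _ => by simpa using hν⟩

/-- A strict upper bound on the integrals over `limitSet T x` eventually bounds the averages. -/
lemma eventually_birkhoffAverage_lt {f : X → ℝ} (hf : Continuous f) {x : X} {c : ℝ}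
    (h : ∀ μ ∈ limitSet T x, ∫ y, f y ∂(μ : Measure X) < c) :
    ∀ᶠ n : ℕ in atTop, birkhoffAverage ℝ T f n x < c := by
  suffices hs : ∀ᶠ n : ℕ in atTop, birkhoffAverage ℝ T f (n + 1) x < c by
    rwa [← map_add_atTop_eq_nat 1, eventually_map]
  by_contra hcon
  obtain ⟨φ, hφ, hφc⟩ := extraction_of_frequently_atTop (not_eventually.1 hcon)
  obtain ⟨μ, ψ, hψ, hlim⟩ := CompactSpace.tendsto_subseq fun n => empiricalPM T x (φ n)
  refine (h μ ⟨φ ∘ ψ, hφ.comp hψ, hlim⟩).not_ge ?_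
  refine ge_of_tendsto' (((continuous_integral_probabilityMeasure hf).tendsto μ).comp hlim)
    fun n => ?_
  simpa only [Function.comp_apply, integral_empiricalPM_s4 hf, not_lt] using hφc (ψ n)

end Observable

/-- **Theorem 6.1 ([Tia18, Proposition A]).** Let `(a_n)`, `(b_n)` be sequences of continuous
functions on the compact metric space `X` with `a_{n+k}(x) ≤ a_n(T^k x) + a_k(x)`,
`b_{n+k}(x) ≤ b_n(T^k x) + b_k(x)` and `a_n(x) ≤ a_{n+k}(x) + b_k(T^n x)` for all `x` and all
`n, k ≥ 0`. If `lim_n (1/n) ∫ a_n dμ < 0` for every observable measure `μ`, then there are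
`λ > 0` and `K ∈ ℕ` such that for `Leb`-a.e. `x`,
`limsup_n (1/(nK)) ∑_{i=0}^{n-1} a_K(T^{iK} x) ≤ -λ < 0`. -/
theorem negative_observable_exponents_implies_nonuniform
    {X : Type*} [MetricSpace X] [CompactSpace X] [MeasurableSpace X] [BorelSpace X]
    (T : X → X) (hT : Continuous T)
    (Leb : MeasureTheory.Measure X) [IsProbabilityMeasure Leb]
    (a b : ℕ → X → ℝ)
    (hacont : ∀ n, Continuous (a n)) (hbcont : ∀ n, Continuous (b n))
    (ha : ∀ n k : ℕ, ∀ x, a (n + k) x ≤ a n (T^[k] x) + a k x)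
    (hb : ∀ n k : ℕ, ∀ x, b (n + k) x ≤ b n (T^[k] x) + b k x)
    (hab : ∀ n k : ℕ, ∀ x, a n x ≤ a (n + k) x + b k (T^[n] x))
    (hneg : ∀ μ : ProbabilityMeasure X, IsObservable Leb T μ →
      liminf (fun n : ℕ =>
        (((n : ℝ)⁻¹ * ∫ x, a n x ∂(μ : Measure X) : ℝ) : EReal)) atTop < 0) :
    ∃ lam : ℝ, 0 < lam ∧ ∃ K : ℕ, 0 < K ∧
      ∀ᵐ x ∂Leb, limsup (fun n : ℕ =>
        ((n : ℝ) * (K : ℝ))⁻¹ * ∑ i ∈ Finset.range n, a K (T^[i * K] x)) atTop ≤ -lam := by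
  have hneg' : ∀ μ : ProbabilityMeasure X, IsObservable Leb T μ →
      ∃ n : ℕ, 0 < n ∧ ∫ x, a n x ∂(μ : Measure X) < 0 := by
    intro μ hμ
    obtain ⟨n, hn, hlt⟩ :=
      ((frequently_lt_of_liminf_lt (by isBoundedDefault) (hneg μ hμ)).and_eventually
        (eventually_gt_atTop 0)).exists.imp fun n h => And.symm h
    refine ⟨n, hn, ?_⟩
    have hlt' : (n : ℝ)⁻¹ * ∫ x, a n x ∂(μ : Measure X) < 0 := by exact_mod_cast hlt
    have hpos : (0 : ℝ) < (n : ℝ)⁻¹ := inv_pos.2 (Nat.cast_pos.2 hn)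
    exact (pos_iff_neg_of_mul_neg hlt').1 hpos
  obtain ⟨L, hL, c, hc, hLc⟩ := exists_integral_lt_of_isObservable hT hacont ha hneg'
  obtain ⟨C, hC⟩ := exists_mul_le_birkhoffSum_add hacont ha L
  obtain ⟨M, hM⟩ := exists_nat_gt (2 * C / c)
  set N := (M + 1) * L with hN
  have hNpos : 0 < N := Nat.mul_pos M.succ_pos hL
  have hLpos : (0 : ℝ) < L := Nat.cast_pos.2 hL
  have hNpos' : (0 : ℝ) < N := Nat.cast_pos.2 hNpos
  have hCN : 2 * C ≤ c * N := by
    have h1 : (M : ℝ) ≤ N := by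
      exact_mod_cast (Nat.le_succ M).trans (Nat.le_mul_of_pos_right _ hL)
    rw [div_lt_iff₀ hc] at hM
    nlinarith
  refine ⟨c / (2 * L), by positivity, N, hNpos, ?_⟩
  filter_upwards [ae_limitSet_subset_isObservable Leb T] with x hx
  have hev := eventually_birkhoffAverage_lt (hacont L) fun μ hμ => hLc μ (hx μ hμ)
  have htend : Tendsto (fun n : ℕ => n * N) atTop atTop :=
    tendsto_id.atTop_mul_const' hNpos
  obtain ⟨B, hB⟩ := exists_forall_abs_le_of_continuous (hacont N)
  refine limsup_le_of_le ?_ ?_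
  · refine IsBoundedUnder.isCoboundedUnder_le ⟨-(B / N), ?_⟩
    rw [eventually_map]
    filter_upwards [eventually_gt_atTop 0] with n hn
    have hn' : (0 : ℝ) < n := Nat.cast_pos.2 hn
    have h1 : ∑ i ∈ Finset.range n, (-B) ≤ ∑ i ∈ Finset.range n, a N (T^[i * N] x) :=
      Finset.sum_le_sum fun i _ => (abs_le.1 (hB _)).1
    simp only [Finset.sum_const, Finset.card_range, nsmul_eq_mul] at h1
    rw [inv_mul_eq_div, ← neg_div, div_le_div_iff₀ hNpos' (by positivity)]
    nlinarith
  · filter_upwards [htend.eventually hev, eventually_gt_atTop 0] with n hn hn0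
    have hn' : (0 : ℝ) < n := Nat.cast_pos.2 hn0
    have h1 := Finset.sum_le_sum fun i (_ : i ∈ Finset.range n) => hC M (T^[i * N] x)
    rw [← hN, Finset.sum_add_distrib, sum_range_sum_range_birkhoff, ← Finset.mul_sum] at h1
    simp only [Finset.sum_const, Finset.card_range, nsmul_eq_mul] at h1
    rw [birkhoffAverage, smul_eq_mul, inv_mul_eq_div, Nat.cast_mul,
      div_lt_iff₀ (by positivity)] at hn
    rw [inv_mul_eq_div, ← neg_div, div_le_div_iff₀ (by positivity) (by positivity)]
    nlinarith
end

section
/- Let Φ = {log φ_n}_{n≥1} be a subadditive potential over (X,T) and β(Φ) := sup{χ(μ,Φ) : μ ∈ M(X,T)}. Then the supremum is attained, and it is attained at some T-ergodic invariant measure; i.e. there exists a T-ergodic μ ∈ M(X,T) with χ(μ,Φ) = β(Φ) (a Lyapunov maximizing measure). -/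
open MeasureTheory Filter Topology
open scoped ENNReal

/-- Every continuous self-map of a nonempty compact metric space has an invariant probability
measure (Krylov–Bogoliubov). -/
theorem exists_invariant_probabilityMeasure {X : Type*} [MetricSpace X] [CompactSpace X]
    [Nonempty X] [MeasurableSpace X] [BorelSpace X] {T : X → X} (hT : Continuous T) :
    ∃ μ : ProbabilityMeasure X, (μ : Measure X).map T = μ := by
  obtain ⟨x⟩ := ‹Nonempty X›
  let U : Ultrafilter ℕ := hyperfilter ℕ
  have hU : (U : Filter ℕ) ≤ atTop := by
    rw [← Nat.cofinite_eq_atTop]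
    exact hyperfilter_le_cofinite
  obtain ⟨μ, -, hμ⟩ := isCompact_univ.ultrafilter_le_nhds (U.map (empiricalPM T x)) (by simp)
  have hμ : Tendsto (empiricalPM T x) U (𝓝 μ) := hμ
  refine ⟨μ, ?_⟩
  have := Measure.isProbabilityMeasure_map (μ := (μ : Measure X)) hT.measurable.aemeasurable
  refine ext_of_forall_integral_eq_of_IsFiniteMeasure fun f ↦ ?_
  rw [integral_map hT.measurable.aemeasurable f.continuous.aestronglyMeasurable]
  have hsum (g : C(X, ℝ)) (n : ℕ) : ∫ y, g y ∂(empiricalPM T x n : Measure X) =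
      (n + 1 : ℝ)⁻¹ * ∑ j ∈ Finset.range (n + 1), g (T^[j] x) := by
    change ∫ y, g y ∂((n + 1 : ℝ≥0∞)⁻¹ • ∑ j ∈ Finset.range (n + 1), Measure.dirac (T^[j] x)) = _
    rw [integral_smul_measure, integral_finsetSum_measure]
    · simp [ENNReal.toReal_add]
    · exact fun i _ ↦ integrable_dirac (by simp)
  have hlim (g : C(X, ℝ)) : Tendsto (fun n ↦ ∫ y, g y ∂(empiricalPM T x n : Measure X)) U
      (𝓝 (∫ y, g y ∂(μ : Measure X))) :=
    ((ProbabilityMeasure.continuous_integral_continuousMap g).tendsto μ).comp hμ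
  let F : C(X, ℝ) := f.toContinuousMap
  have h₁ := (hlim (F.comp ⟨T, hT⟩)).sub (hlim F)
  have h₂ : Tendsto (fun n : ℕ ↦ (n + 1 : ℝ)⁻¹ * (F (T^[n + 1] x) - F x)) U (𝓝 0) := by
    refine Tendsto.mono_left ?_ hU
    refine squeeze_zero_norm (a := fun n : ℕ ↦ (n + 1 : ℝ)⁻¹ * (2 * ‖F‖)) (fun n ↦ ?_) ?_
    · rw [norm_mul, Real.norm_of_nonneg (by positivity)]
      gcongr
      linarith [norm_sub_le (F (T^[n + 1] x)) (F x), F.norm_coe_le_norm (T^[n + 1] x),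
        F.norm_coe_le_norm x]
    · simpa [one_div] using
        (tendsto_one_div_add_atTop_nhds_zero_nat (𝕜 := ℝ)).mul_const (2 * ‖F‖)
  have h₃ := tendsto_nhds_unique (h₁.congr fun n ↦ ?_) h₂
  · exact sub_eq_zero.1 h₃
  · rw [hsum, hsum, ← mul_sub, ← Finset.sum_sub_distrib]
    congr 1
    simpa [Function.iterate_succ_apply'] using Finset.sum_range_sub (fun j ↦ F (T^[j] x)) (n + 1)

/-- The invariant probability measures of a continuous map form a closed set. -/
theorem isClosed_setOf_map_eq {X : Type*} [MetricSpace X] [MeasurableSpace X] [BorelSpace X]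
    {T : X → X} (hT : Continuous T) :
    IsClosed {μ : ProbabilityMeasure X | (μ : Measure X).map T = μ} := by
  have : {μ : ProbabilityMeasure X | (μ : Measure X).map T = μ} =
      {μ | μ.map hT.measurable.aemeasurable = μ} := by
    ext μ
    exact (Subtype.ext_iff (a1 := μ.map hT.measurable.aemeasurable)).symm
  rw [this]
  exact isClosed_eq (ProbabilityMeasure.continuous_map hT) continuous_id

theorem integral_add_smul_measure {X : Type*} [TopologicalSpace X] [CompactSpace X]
    [MeasurableSpace X] [BorelSpace X] {ν₁ ν₂ : Measure X}
    [IsFiniteMeasure ν₁] [IsFiniteMeasure ν₂] {a b : ℝ≥0∞} (ha : a ≠ ∞) (hb : b ≠ ∞)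
    {f : X → ℝ} (hf : Continuous f) :
    ∫ x, f x ∂(a • ν₁ + b • ν₂) = a.toReal * ∫ x, f x ∂ν₁ + b.toReal * ∫ x, f x ∂ν₂ := by
  have hi (ν : Measure X) [IsFiniteMeasure ν] : Integrable f ν :=
    hf.integrable_of_hasCompactSupport (HasCompactSupport.of_compactSpace f)
  rw [integral_add_measure ((hi ν₁).smul_measure ha) ((hi ν₂).smul_measure hb),
    integral_smul_measure, integral_smul_measure, smul_eq_mul, smul_eq_mul]

/-- A nonempty compact set of invariant probability measures which is extreme in the set of all
invariant probability measures contains an ergodic measure. -/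
theorem exists_ergodic_of_isCompact_of_extreme {X : Type*} [MetricSpace X] [CompactSpace X]
    [MeasurableSpace X] [BorelSpace X] {T : X → X} (hT : Measurable T)
    {F : Set (ProbabilityMeasure X)} (hF : IsCompact F) (hne : F.Nonempty)
    (hinv : ∀ μ ∈ F, (μ : Measure X).map T = μ)
    (hext : ∀ μ ∈ F, ∀ ν₁ ν₂ : ProbabilityMeasure X, (ν₁ : Measure X).map T = ν₁ →
      (ν₂ : Measure X).map T = ν₂ → ∀ a b : ℝ≥0∞, 0 < a → 0 < b → a + b = 1 →
      (μ : Measure X) = a • (ν₁ : Measure X) + b • (ν₂ : Measure X) → ν₁ ∈ F) :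
    ∃ μ ∈ F, Ergodic T (μ : Measure X) := by
  let L : ProbabilityMeasure X → C(X, ℝ) → ℝ := fun μ f ↦ ∫ x, f x ∂(μ : Measure X)
  have hL : Continuous L :=
    continuous_pi fun f ↦ ProbabilityMeasure.continuous_integral_continuousMap f
  obtain ⟨y, hy⟩ := (hF.image hL).extremePoints_nonempty (hne.image L)
  rw [mem_extremePoints_iff_left] at hy
  obtain ⟨⟨μ, hμ, rfl⟩, hy⟩ := hy
  refine ⟨μ, hμ, Ergodic.of_mem_extremePoints ?_⟩
  rw [mem_extremePoints_iff_left]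
  refine ⟨⟨⟨hT, hinv μ hμ⟩, inferInstance⟩, ?_⟩
  rintro ν₁ ⟨hν₁, hp₁⟩ ν₂ ⟨hν₂, hp₂⟩ ⟨a, b, ha, hb, hab, h⟩
  have ha' : a ≠ ∞ := fun h ↦ by simp [h] at hab
  have hb' : b ≠ ∞ := fun h ↦ by simp [h] at hab
  have h₁ := hext μ hμ ⟨ν₁, hp₁⟩ ⟨ν₂, hp₂⟩ hν₁.map_eq hν₂.map_eq a b ha hb hab h.symm
  have h₂ := hext μ hμ ⟨ν₂, hp₂⟩ ⟨ν₁, hp₁⟩ hν₂.map_eq hν₁.map_eq b a hb ha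
    (by rwa [add_comm]) (by rw [add_comm]; exact h.symm)
  have key := hy _ ⟨_, h₁, rfl⟩ _ ⟨_, h₂, rfl⟩ ⟨a.toReal, b.toReal, ENNReal.toReal_pos ha.ne' ha',
    ENNReal.toReal_pos hb.ne' hb', by simp [← ENNReal.toReal_add ha' hb', hab], ?_⟩
  · exact ext_of_forall_integral_eq_of_IsFiniteMeasure fun f ↦ congrFun key f.toContinuousMap
  · funext f
    simp only [L, ← h, Pi.add_apply, Pi.smul_apply, smul_eq_mul]
    exact (integral_add_smul_measure (ν₁ := ν₁) (ν₂ := ν₂) ha' hb' f.continuous).symm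

section Subadditive

variable {X : Type*} [TopologicalSpace X] [CompactSpace X] [MeasurableSpace X] [BorelSpace X]
  {T : X → X} {φ : ℕ → X → ℝ} {μ : Measure X} [IsFiniteMeasure μ]

/-- The integrals of a subadditive potential against an invariant measure form a subadditive
sequence, once the (irrelevant) term of index `0` is set to `0`. -/
theorem subadditive_integral_log (hT : Continuous T)
    (hcont : ∀ n, 1 ≤ n → Continuous (φ n)) (hpos : ∀ n, 1 ≤ n → ∀ x, 0 < φ n x)
    (hsub : ∀ m n, 1 ≤ m → 1 ≤ n → ∀ x, φ (m + n) x ≤ φ m x * φ n (T^[m] x))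
    (hμ : μ.map T = μ) :
    Subadditive fun n ↦ if n = 0 then 0 else ∫ x, Real.log (φ n x) ∂μ := by
  intro m n
  rcases Nat.eq_zero_or_pos m with rfl | hm
  · simp
  rcases Nat.eq_zero_or_pos n with rfl | hn
  · simp
  have hlog (k : ℕ) (hk : 1 ≤ k) : Continuous fun x ↦ Real.log (φ k x) :=
    (hcont k hk).log fun x ↦ (hpos k hk x).ne'
  have hi {f : X → ℝ} (hf : Continuous f) : Integrable f μ :=
    hf.integrable_of_hasCompactSupport (HasCompactSupport.of_compactSpace f)
  have hTm := hT.iterate m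
  have hmap : ∫ x, Real.log (φ n (T^[m] x)) ∂μ = ∫ x, Real.log (φ n x) ∂μ := by
    have hpm : μ.map T^[m] = μ := (MeasurePreserving.mk hT.measurable hμ).iterate m |>.map_eq
    conv_rhs => rw [← hpm]
    exact (integral_map hTm.measurable.aemeasurable
      (hlog n hn).aestronglyMeasurable).symm
  have hle : ∫ x, Real.log (φ (m + n) x) ∂μ ≤
      ∫ x, (Real.log (φ m x) + Real.log (φ n (T^[m] x))) ∂μ := by
    refine integral_mono (hi (hlog _ (by lia))) (hi ((hlog m hm).add ((hlog n hn).comp hTm)))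
      fun x ↦ ?_
    dsimp only
    rw [← Real.log_mul (hpos m hm x).ne' (hpos n hn _).ne']
    exact Real.log_le_log (hpos _ (by lia) x) (hsub m n hm hn x)
  rw [integral_add (hi (hlog m hm)) (g := fun x ↦ Real.log (φ n (T^[m] x)))
    (hi ((hlog n hn).comp hTm)), hmap] at hle
  simpa [hm.ne', hn.ne'] using hle

theorem eventually_integral_log_lt (hT : Continuous T)
    (hcont : ∀ n, 1 ≤ n → Continuous (φ n)) (hpos : ∀ n, 1 ≤ n → ∀ x, 0 < φ n x)
    (hsub : ∀ m n, 1 ≤ m → 1 ≤ n → ∀ x, φ (m + n) x ≤ φ m x * φ n (T^[m] x))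
    (hμ : μ.map T = μ) {r : ℝ}
    (hr : ⨅ n : ℕ, ((((n + 1 : ℕ) : ℝ)⁻¹ * ∫ x, Real.log (φ (n + 1) x) ∂μ : ℝ) : EReal) < r) :
    ∀ᶠ n : ℕ in atTop, (n : ℝ)⁻¹ * ∫ x, Real.log (φ n x) ∂μ < r := by
  obtain ⟨n, hn⟩ := iInf_lt_iff.1 hr
  rw [EReal.coe_lt_coe_iff] at hn
  have h := (subadditive_integral_log hT hcont hpos hsub hμ).eventually_div_lt_of_div_lt
    n.succ_ne_zero (L := r) (by simpa [div_eq_inv_mul] using hn)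
  filter_upwards [h, eventually_ne_atTop 0] with k hk hk0
  simpa [hk0, div_eq_inv_mul] using hk

/-- For an invariant measure the Lyapunov exponent is an infimum (Fekete's lemma). -/
theorem lyapExp_eq_iInf (hT : Continuous T)
    (hcont : ∀ n, 1 ≤ n → Continuous (φ n)) (hpos : ∀ n, 1 ≤ n → ∀ x, 0 < φ n x)
    (hsub : ∀ m n, 1 ≤ m → 1 ≤ n → ∀ x, φ (m + n) x ≤ φ m x * φ n (T^[m] x))
    (hμ : μ.map T = μ) :
    lyapExp φ μ =
      ⨅ n : ℕ, ((((n + 1 : ℕ) : ℝ)⁻¹ * ∫ x, Real.log (φ (n + 1) x) ∂μ : ℝ) : EReal) := by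
  refine le_antisymm (EReal.le_of_forall_lt_iff_le.1 fun r hr ↦ ?_) ?_
  · refine liminf_le_of_frequently_le' (Eventually.frequently ?_)
    filter_upwards [eventually_integral_log_lt hT hcont hpos hsub hμ hr] with n hn
    exact_mod_cast hn.le
  · refine le_liminf_of_le (by isBoundedDefault) ?_
    filter_upwards [eventually_ge_atTop 1] with n hn
    obtain ⟨k, rfl⟩ := Nat.exists_eq_add_of_le' hn
    exact iInf_le _ k

end Subadditive

/-- **Existence of Lyapunov maximizing measures.** For a subadditive potential
`Φ = {log φ_n}` over a continuous map `T` of a (nonempty) compact metric space `X`, the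
supremum `β(Φ) = sup {χ(μ,Φ) : μ ∈ M(X,T)}` is attained, and it is attained at some
`T`-ergodic invariant measure. -/
theorem exists_ergodic_lyapunov_maximizing
    {X : Type*} [MetricSpace X] [CompactSpace X] [Nonempty X]
    [MeasurableSpace X] [BorelSpace X]
    (T : X → X) (hT : Continuous T)
    (φ : ℕ → X → ℝ)
    (hcont : ∀ n, 1 ≤ n → Continuous (φ n))
    (hpos : ∀ n, 1 ≤ n → ∀ x, 0 < φ n x)
    (hsub : ∀ m n, 1 ≤ m → 1 ≤ n → ∀ x, φ (m + n) x ≤ φ m x * φ n (T^[m] x)) :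
    ∃ μ : ProbabilityMeasure X, Ergodic T (μ : Measure X) ∧
      lyapExp φ (μ : Measure X) =
        sSup {c : EReal | ∃ ν : ProbabilityMeasure X,
          (ν : Measure X).map T = (ν : Measure X) ∧ c = lyapExp φ (ν : Measure X)} := by
  let a : ℕ → ProbabilityMeasure X → ℝ := fun n μ ↦
    (n : ℝ)⁻¹ * ∫ x, Real.log (φ n x) ∂(μ : Measure X)
  let g : ProbabilityMeasure X → EReal := fun μ ↦ ⨅ n : ℕ, (a (n + 1) μ : EReal)
  let K : Set (ProbabilityMeasure X) := {μ | (μ : Measure X).map T = μ}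
  have hlog (n : ℕ) (hn : 1 ≤ n) : Continuous fun x ↦ Real.log (φ n x) :=
    (hcont n hn).log fun x ↦ (hpos n hn x).ne'
  have hg : UpperSemicontinuous g := upperSemicontinuous_iInf fun n ↦
    (continuous_coe_real_ereal.comp (continuous_const.mul
      (ProbabilityMeasure.continuous_integral_continuousMap
        (⟨_, hlog (n + 1) (by lia)⟩ : C(X, ℝ))))).upperSemicontinuous
  have hK : IsCompact K := (isClosed_setOf_map_eq hT).isCompact
  have hgK {μ : ProbabilityMeasure X} (hμ : μ ∈ K) : lyapExp φ (μ : Measure X) = g μ :=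
    lyapExp_eq_iInf hT hcont hpos hsub hμ
  have hKne : K.Nonempty := exists_invariant_probabilityMeasure hT
  obtain ⟨μ₀, hμ₀, hmax⟩ := (hg.upperSemicontinuousOn K).exists_isMaxOn hKne hK
  rw [isMaxOn_iff] at hmax
  have hF : IsCompact (K ∩ g ⁻¹' Set.Ici (g μ₀)) := hK.inter_right (hg.isClosed_preimage _)
  obtain ⟨μ, ⟨hμK, hμ⟩, herg⟩ := exists_ergodic_of_isCompact_of_extreme hT.measurable hF
    ⟨μ₀, hμ₀, le_refl (g μ₀)⟩ (fun μ hμ ↦ hμ.1) (by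
      rintro μ ⟨hμK, hμ⟩ ν₁ ν₂ h₁ h₂ s t hs ht hst h
      refine ⟨h₁, ?_⟩
      by_contra hlt
      have hlt : g ν₁ < g μ₀ := not_le.1 hlt
      have hs' : s ≠ ∞ := fun h ↦ by simp [h] at hst
      have ht' : t ≠ ∞ := fun h ↦ by simp [h] at hst
      have hs0 := ENNReal.toReal_pos hs.ne' hs'
      have ht0 := ENNReal.toReal_pos ht.ne' ht'
      have hst1 : s.toReal + t.toReal = 1 := by simp [← ENNReal.toReal_add hs' ht', hst]
      have htop : g μ₀ ≠ ⊤ :=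
        ((iInf_le (fun n : ℕ ↦ (a (n + 1) μ₀ : EReal)) 0).trans_lt (EReal.coe_lt_top _)).ne
      obtain ⟨b, hb⟩ : ∃ b : ℝ, g μ₀ = b :=
        ⟨_, (EReal.coe_toReal htop (bot_le.trans_lt hlt).ne').symm⟩
      obtain ⟨r, hr₁, hr₂⟩ := EReal.lt_iff_exists_real_btwn.1 hlt
      have hrb : r < b := by rwa [hb, EReal.coe_lt_coe_iff] at hr₂
      have hδ : 0 < s.toReal * (b - r) := mul_pos hs0 (sub_pos.2 hrb)
      have hν₂ : g ν₂ < ((b + s.toReal * (b - r) : ℝ) : EReal) :=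
        ((hmax ν₂ h₂).trans hb.le).trans_lt (EReal.coe_lt_coe_iff.2 (by linarith))
      obtain ⟨n, ⟨hn₁, hn₂⟩, hn⟩ :=
        ((eventually_integral_log_lt hT hcont hpos hsub h₁ hr₁).and
          (eventually_integral_log_lt hT hcont hpos hsub h₂ hν₂)).and
            (eventually_ge_atTop 1) |>.exists
      have hbn : b ≤ a n μ := by
        rw [← EReal.coe_le_coe_iff, ← hb]
        obtain ⟨k, rfl⟩ := Nat.exists_eq_add_of_le' hn
        exact le_trans hμ (iInf_le _ k)
      have han : a n μ = s.toReal * a n ν₁ + t.toReal * a n ν₂ := by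
        simp only [a]
        rw [h, integral_add_smul_measure hs' ht' (hlog n hn)]
        ring
      have e₁ : s.toReal * a n ν₁ < s.toReal * r := by gcongr
      have e₂ : t.toReal * a n ν₂ < t.toReal * (b + s.toReal * (b - r)) := by gcongr
      have e₃ : t.toReal * (s.toReal * (b - r)) ≤ 1 * (s.toReal * (b - r)) := by
        gcongr
        linarith
      have e₄ : (s.toReal + t.toReal) * b = 1 * b := by rw [hst1]
      linarith)
  refine ⟨μ, herg, le_antisymm (le_sSup ⟨μ, hμK, rfl⟩) (sSup_le ?_)⟩
  rintro _ ⟨ν, hν, rfl⟩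
  rw [hgK hμK, hgK hν]
  exact (hmax ν hν).trans hμ
end
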